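/- There exist a natural number s₀ and a constant c > 0 such that for every integer a ≥ 2 and every integer N ≥ a^{s₀} the following holds: set s = ⌊log_a N⌋ and let λ be the largest real root of the polynomial x³ − (s+2)x² + s·x + (s+4). Then there exists M such that for all m ≥ M, f(a^m, N) ≥ c · 2^{−5·(log₂ log₂ N)²} · m^{log₂ λ}. -/

import Mathlib

/-- The continuant of a finite sequence of positive integers. -/
def continuant : List ℕ → ℕ
  | [] => 1
  | [a] => a
  | a :: b :: t => a * continuant (b :: t) + continuant t

/-- `f d N` is the number of finite sequences of positive integers, all entries `< N`,
whose continuant equals `d`. -/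
noncomputable def f (d N : ℕ) : ℕ :=
  Set.ncard {l : List ℕ | (∀ x ∈ l, 0 < x ∧ x < N) ∧ continuant l = d}

/-- `lam` is the largest real root of the real function `p`. -/
def IsGreatestRoot (p : ℝ → ℝ) (lam : ℝ) : Prop :=
  p lam = 0 ∧ ∀ x : ℝ, p x = 0 → x ≤ lam

/-! Put `e = a² - 1` and call `Q` a core of level `k` if the word `e Q e` has continuant `a ^ k`. A
core of level `n` can be folded around a short block, to a core `Q B Qʳ` of level `2 n + j`, in two
ways for each `j` with `a ^ j ≤ N`, and `B` and `Q` can be read off from `Q B Qʳ`, since the two end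
letters of `B` are distinct. With `a ^ s ≤ N`, the number `T m` of cores of level `m` therefore
satisfies `T m ≥ 2 ∑ T n`, the sum running over the `n` with `0 ≤ m - 2 n ≤ s`.

Let `A` be the positive operator `(A g) m = 2 ∑ g n` over the same range of `n`, and put
`ρ = s + 1`. Then `A 1 = ρ + η`, where `|η| ≤ 1` and `η` changes sign under the shift by `1`. If `g`
changes sign under the shift by `q`, then its sums over intervals are at most `q sup |g|`, and `A g`
changes sign under the shift by `2 q`; so `|A η| ≤ 2`, `|A² η| ≤ 8` and `|A³ η| ≤ 64`. The truncated
Neumann series `g = 1 + η / ρ + A η / ρ² + A² η / ρ³` satisfies `A g = ρ g + A³ η / ρ³`, hence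
`A g ≥ μ g` with `μ = ρ - 2 / ρ²`. Comparison with `g` shows that `T m` grows at least like
`m ^ log₂ μ`, and the largest root of the cubic, which is about `ρ - 3 / ρ²`, is smaller than
`μ`. -/

section Continuant

open Matrix

lemma continuant_pos : ∀ {l : List ℕ}, (∀ x ∈ l, 0 < x) → 0 < continuant l
  | [], _ => Nat.one_pos
  | [a], h => h a (List.mem_singleton_self a)
  | _ :: _ :: _, h =>
    Nat.add_pos_right _ <| continuant_pos fun x hx =>
      h x (List.mem_cons_of_mem _ (List.mem_cons_of_mem _ hx))

lemma length_le_continuant : ∀ {l : List ℕ}, (∀ x ∈ l, 0 < x) → l.length ≤ continuant l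
  | [], _ => Nat.zero_le _
  | [a], h => h a (List.mem_singleton_self a)
  | a :: b :: t, h => by
    have htail : (b :: t).length ≤ continuant (b :: t) :=
      length_le_continuant fun x hx => h x (List.mem_cons_of_mem _ hx)
    have hpos : 0 < continuant t :=
      continuant_pos fun x hx => h x (List.mem_cons_of_mem _ (List.mem_cons_of_mem _ hx))
    calc (a :: b :: t).length = (b :: t).length + 1 := rfl
      _ ≤ 1 * continuant (b :: t) + continuant t := by omega
      _ ≤ a * continuant (b :: t) + continuant t := by
        gcongr
        exact h a List.mem_cons_self

lemma finite_setOf_continuant_eq (d N : ℕ) :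
    {l : List ℕ | (∀ x ∈ l, 0 < x ∧ x < N) ∧ continuant l = d}.Finite := by
  refine ((List.finite_length_le (Fin N) d).image (List.map Fin.val)).subset ?_
  rintro l ⟨hl, rfl⟩
  refine ⟨l.attach.map fun x => ⟨x.1, (hl x.1 x.2).2⟩, ?_, ?_⟩
  · simpa using length_le_continuant fun x hx => (hl x hx).1
  · simp [List.map_map, Function.comp_def]

/-- The product of the matrices `!![x, 1; 1, 0]` along a word, whose top left entry is the
continuant of the word. -/
def continuantMatrix (l : List ℕ) : Matrix (Fin 2) (Fin 2) ℕ :=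
  (l.map fun x => !![x, 1; 1, 0]).prod

lemma continuantMatrix_cons (x : ℕ) (l : List ℕ) :
    continuantMatrix (x :: l) = !![x, 1; 1, 0] * continuantMatrix l :=
  List.prod_cons

lemma continuantMatrix_append (l l' : List ℕ) :
    continuantMatrix (l ++ l') = continuantMatrix l * continuantMatrix l' := by
  simp [continuantMatrix]

lemma continuantMatrix_reverse (l : List ℕ) :
    continuantMatrix l.reverse = (continuantMatrix l)ᵀ := by
  have hsymm (x : ℕ) : (!![x, 1; 1, 0] : Matrix (Fin 2) (Fin 2) ℕ)ᵀ = !![x, 1; 1, 0] := by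
    ext i j
    fin_cases i <;> fin_cases j <;> rfl
  simp [continuantMatrix, transpose_list_prod, Function.comp_def, hsymm]

lemma continuant_eq_continuantMatrix : ∀ l : List ℕ, continuant l = continuantMatrix l 0 0
  | [] => rfl
  | [a] => by simp [continuantMatrix, continuant]
  | a :: b :: t => by
    rw [continuant, continuant_eq_continuantMatrix (b :: t), continuant_eq_continuantMatrix t]
    simp only [continuantMatrix_cons, mul_apply, Fin.sum_univ_two]
    simp

lemma continuant_append_singleton (l : List ℕ) (x : ℕ) :
    continuant (l ++ [x]) = x * continuantMatrix l 0 0 + continuantMatrix l 0 1 := by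
  simp [continuant_eq_continuantMatrix, continuantMatrix, mul_apply, Fin.sum_univ_two,
    mul_comm]

lemma continuant_append_append_reverse (P B : List ℕ) :
    continuant (P ++ B ++ P.reverse) =
      continuantMatrix P 0 ⬝ᵥ continuantMatrix B *ᵥ continuantMatrix P 0 := by
  rw [continuant_eq_continuantMatrix, continuantMatrix_append, continuantMatrix_append,
    continuantMatrix_reverse, mul_mul_apply, transpose_transpose]

end Continuant

section Folding

open Matrix

/-- The blocks around which words are folded: folding `P` around such a block gives `b` times the
square of the continuant of `P` extended by the letter `d + 1`. The Boolean chooses between the two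
orientations of the block. -/
def foldBlock (d b : ℕ) (o : Bool) : List ℕ :=
  if b = 1 then (if o then [d + 2, d] else [d, d + 2])
  else (if o then [d + 1, b - 1, 1, d] else [d, 1, b - 1, d + 1])

/-- The fold of the word `Q` around a block. -/
def foldWord (d b : ℕ) (o : Bool) (Q : List ℕ) : List ℕ :=
  Q ++ foldBlock d b o ++ Q.reverse

lemma pos_and_lt_of_mem_foldBlock {N d b : ℕ} {o : Bool} (hd : 0 < d) (hN : d + 2 < N)
    (hb : 0 < b) (hbN : b ≤ N) : ∀ x ∈ foldBlock d b o, 0 < x ∧ x < N := by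
  intro x hx
  by_cases h1 : b = 1 <;> cases o <;> simp [foldBlock, h1] at hx <;> omega

lemma foldBlock_quadraticForm (d : ℕ) {b : ℕ} (hb : 0 < b) (o : Bool) (v : Fin 2 → ℕ) :
    v ⬝ᵥ continuantMatrix (foldBlock d b o) *ᵥ v = b * ((d + 1) * v 0 + v 1) ^ 2 := by
  obtain ⟨y, rfl⟩ : ∃ y, b = y + 1 := ⟨b - 1, by omega⟩
  rcases eq_or_ne y 0 with rfl | hy <;> cases o <;>
    simp [foldBlock, continuantMatrix, dotProduct, mulVec, mul_apply, Fin.sum_univ_two, *] <;> ring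

lemma continuant_foldWord (P : List ℕ) (d : ℕ) {b : ℕ} (hb : 0 < b) (o : Bool) :
    continuant (foldWord d b o P) = b * continuant (P ++ [d + 1]) ^ 2 := by
  rw [foldWord, continuant_append_append_reverse, foldBlock_quadraticForm d hb,
    continuant_append_singleton]

lemma append_append_reverse_inj {α : Type*} {P Q B C : List α} (hB : B.head? ≠ B.getLast?)
    (hC : C.head? ≠ C.getLast?) (h : P ++ B ++ P.reverse = Q ++ C ++ Q.reverse) :
    P = Q ∧ B = C := by
  have cons_fold (x : α) (P B : List α) :
      x :: P ++ B ++ (x :: P).reverse = x :: (P ++ B ++ P.reverse) ++ [x] := by simp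
  have head?_eq (x : α) (l : List α) : (x :: l ++ [x]).head? = (x :: l ++ [x]).getLast? := by
    rw [List.getLast?_concat]
    rfl
  induction P generalizing Q with
  | nil =>
    cases Q with
    | nil => simpa using h
    | cons y Q =>
      rw [List.nil_append, List.reverse_nil, List.append_nil, cons_fold] at h
      exact absurd (h ▸ head?_eq y _) hB
  | cons x P ih =>
    cases Q with
    | nil =>
      rw [List.nil_append, List.reverse_nil, List.append_nil, cons_fold] at h
      exact absurd (h ▸ head?_eq x _) hC
    | cons y Q =>
      rw [cons_fold, cons_fold] at h
      obtain ⟨hinit, hlast⟩ := List.append_inj' h rfl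
      obtain ⟨rfl, hinner⟩ := List.cons_eq_cons.1 hinit
      obtain ⟨rfl, hBC⟩ := ih hinner
      exact ⟨rfl, hBC⟩

lemma foldBlock_head?_ne_getLast? (d b : ℕ) (o : Bool) :
    (foldBlock d b o).head? ≠ (foldBlock d b o).getLast? := by
  by_cases hb : b = 1 <;> cases o <;> simp [foldBlock, hb]

lemma foldBlock_inj {d b b' : ℕ} {o o' : Bool} (hb : 0 < b) (hb' : 0 < b')
    (h : foldBlock d b o = foldBlock d b' o') : b = b' ∧ o = o' := by
  by_cases h1 : b = 1 <;> by_cases h1' : b' = 1 <;> cases o <;> cases o' <;>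
    simp [foldBlock, h1, h1'] at h ⊢ <;> omega

lemma foldWord_inj {d b b' : ℕ} {o o' : Bool} {Q Q' : List ℕ} (hb : 0 < b) (hb' : 0 < b')
    (h : foldWord d b o Q = foldWord d b' o' Q') : b = b' ∧ o = o' ∧ Q = Q' := by
  obtain ⟨rfl, hblock⟩ := append_append_reverse_inj (foldBlock_head?_ne_getLast? d b o)
    (foldBlock_head?_ne_getLast? d b' o') h
  obtain ⟨rfl, rfl⟩ := foldBlock_inj hb hb' hblock
  exact ⟨rfl, rfl, rfl⟩

end Folding

section Cores

variable {a N d s : ℕ}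

/-- The cores of level `k`: the interiors `Q` of the words `e Q e` with continuant `a ^ k`, where
`e = d + 1` and the letters of `Q` are below `N`. -/
def cores (a N d k : ℕ) : Set (List ℕ) :=
  {Q | (∀ x ∈ Q, 0 < x ∧ x < N) ∧ continuant ((d + 1) :: Q ++ [d + 1]) = a ^ k}

lemma injective_wrap {α : Type*} (x : α) : Function.Injective fun Q : List α => x :: Q ++ [x] :=
  fun Q Q' h => by simpa using h

lemma mapsTo_wrap_cores (hN : d + 1 < N) (k : ℕ) :
    Set.MapsTo (fun Q => (d + 1) :: Q ++ [d + 1]) (cores a N d k)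
      {l : List ℕ | (∀ x ∈ l, 0 < x ∧ x < N) ∧ continuant l = a ^ k} := by
  rintro Q ⟨hQ, hc⟩
  refine ⟨fun x hx => ?_, hc⟩
  simp only [List.cons_append, List.mem_cons, List.mem_append, List.not_mem_nil, or_false] at hx
  rcases hx with rfl | hx | rfl
  exacts [⟨by omega, hN⟩, hQ x hx, ⟨by omega, hN⟩]

lemma finite_cores (hN : d + 1 < N) (k : ℕ) : (cores a N d k).Finite :=
  .of_injOn (mapsTo_wrap_cores hN k) (injective_wrap _).injOn (finite_setOf_continuant_eq _ _)

lemma ncard_cores_le_f (hN : d + 1 < N) (k : ℕ) : (cores a N d k).ncard ≤ f (a ^ k) N :=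
  Set.ncard_le_ncard_of_injOn _ (mapsTo_wrap_cores hN k) (injective_wrap _).injOn
    (finite_setOf_continuant_eq _ _)

lemma foldWord_mem_cores {k j : ℕ} (o : Bool) (ha : 0 < a) (hd : 0 < d) (hN : d + 2 < N)
    (hj : a ^ j ≤ N) {Q : List ℕ} (hQ : Q ∈ cores a N d k) :
    foldWord d (a ^ j) o Q ∈ cores a N d (2 * k + j) := by
  obtain ⟨hletters, hcont⟩ := hQ
  refine ⟨fun x hx => ?_, ?_⟩
  · simp only [foldWord, List.mem_append, List.mem_reverse] at hx
    rcases hx with (hx | hx) | hx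
    exacts [hletters x hx, pos_and_lt_of_mem_foldBlock hd hN (pow_pos ha j) hj x hx, hletters x hx]
  · calc continuant ((d + 1) :: foldWord d (a ^ j) o Q ++ [d + 1])
        = continuant (foldWord d (a ^ j) o ((d + 1) :: Q)) := by simp [foldWord]
      _ = a ^ j * (a ^ k) ^ 2 := by rw [continuant_foldWord _ _ (pow_pos ha j), hcont]
      _ = a ^ (2 * k + j) := by ring

/-- These cores come from folding the word `e, e + 2`, whose continuant is `(e + 1) ^ 2 = a ^ 4`. -/
lemma foldBlock_mem_cores {i : ℕ} (o : Bool) (ha : 0 < a) (hda : d + 2 = a ^ 2) (hN : d + 4 < N)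
    (hi : a ^ i ≤ N) : foldBlock (d + 2) (a ^ i) o ∈ cores a N d (8 + i) := by
  refine ⟨pos_and_lt_of_mem_foldBlock (by omega) (by omega) (pow_pos ha i) hi, ?_⟩
  have hseed : continuant ([d + 1] ++ [d + 3]) = (a ^ 2) ^ 2 := by
    rw [← hda]
    simp only [List.cons_append, List.nil_append, continuant]
    ring
  calc continuant ((d + 1) :: foldBlock (d + 2) (a ^ i) o ++ [d + 1])
      = continuant (foldWord (d + 2) (a ^ i) o [d + 1]) := rfl
    _ = a ^ i * ((a ^ 2) ^ 2) ^ 2 := by rw [continuant_foldWord _ _ (pow_pos ha i), hseed]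
    _ = a ^ (8 + i) := by ring

lemma cores_nonempty (ha : 0 < a) (hd : 0 < d) (hda : d + 2 = a ^ 2) (hN : d + 4 < N)
    (haN : a ^ 7 ≤ N) {k : ℕ} (hk : 8 ≤ k) : (cores a N d k).Nonempty := by
  have hpow {j : ℕ} (hj : j ≤ 7) : a ^ j ≤ N := (Nat.pow_le_pow_right ha hj).trans haN
  induction k using Nat.strong_induction_on with
  | _ k ih =>
    rcases lt_or_ge k 16 with hlt | hge
    · obtain ⟨i, rfl⟩ := Nat.exists_eq_add_of_le hk
      exact ⟨_, foldBlock_mem_cores true ha hda hN (hpow (by omega))⟩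
    · obtain ⟨Q, hQ⟩ := ih (k / 2) (by omega) (by omega)
      refine ⟨foldWord d (a ^ (k % 2)) true Q, ?_⟩
      simpa only [Nat.div_add_mod] using
        foldWord_mem_cores true ha hd (by omega) (hpow (j := k % 2) (by omega)) hQ

/-- The integers `n` with `0 ≤ m - 2 n ≤ s`. They are the levels from which level `m` is reached by
one fold. -/
noncomputable def foldWindow (s : ℕ) (m : ℤ) : Finset ℤ := Finset.Icc ((m - s + 1) / 2) (m / 2)

lemma mem_foldWindow {m n : ℤ} : n ∈ foldWindow s m ↔ 0 ≤ m - 2 * n ∧ m - 2 * n ≤ s := by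
  rw [foldWindow, Finset.mem_Icc]
  omega

lemma two_mul_sum_ncard_cores_le (ha : 2 ≤ a) (hd : 0 < d) (hN : d + 2 < N) (hs : a ^ s ≤ N)
    {m : ℤ} (hm : s ≤ m) :
    2 * ∑ n ∈ foldWindow s m, (cores a N d n.toNat).ncard ≤ (cores a N d m.toNat).ncard := by
  have ha0 : 0 < a := by omega
  have hfin (k : ℕ) : (cores a N d k).Finite := finite_cores (by omega) k
  let S : Finset (Σ _ : ℤ, Bool × List ℕ) :=
    (foldWindow s m).sigma fun n => Finset.univ ×ˢ (hfin n.toNat).toFinset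
  let fold (t : Σ _ : ℤ, Bool × List ℕ) : List ℕ :=
    foldWord d (a ^ (m - 2 * t.1).toNat) t.2.1 t.2.2
  have hcard : S.card = 2 * ∑ n ∈ foldWindow s m, (cores a N d n.toNat).ncard := by
    simp [S, Finset.mul_sum, Set.ncard_eq_toFinset_card _ (hfin _)]
  have hS {t : Σ _ : ℤ, Bool × List ℕ} (ht : t ∈ S) :
      (0 ≤ m - 2 * t.1 ∧ m - 2 * t.1 ≤ s) ∧ t.2.2 ∈ cores a N d t.1.toNat := by
    simpa [S, mem_foldWindow] using ht
  have hmaps : ∀ t ∈ S, fold t ∈ (hfin m.toNat).toFinset := by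
    intro t ht
    obtain ⟨⟨hn0, hns⟩, hQ⟩ := hS ht
    have hlevel : 2 * t.1.toNat + (m - 2 * t.1).toNat = m.toNat := by omega
    have hpow : a ^ (m - 2 * t.1).toNat ≤ N := (Nat.pow_le_pow_right ha0 (by omega)).trans hs
    rw [Set.Finite.mem_toFinset, ← hlevel]
    exact foldWord_mem_cores t.2.1 ha0 hd hN hpow hQ
  have hinj : Set.InjOn fold S := by
    rintro ⟨n, o, Q⟩ ht ⟨n', o', Q'⟩ ht' h
    obtain ⟨hpow, rfl, rfl⟩ := foldWord_inj (pow_pos ha0 _) (pow_pos ha0 _) h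
    have hj := Nat.pow_right_injective ha hpow
    have hn := (hS ht).1
    have hn' := (hS ht').1
    obtain rfl : n = n' := by simp only at hj hn hn'; omega
    rfl
  rw [← hcard, Set.ncard_eq_toFinset_card _ (hfin m.toNat)]
  exact Finset.card_le_card_of_injOn fold hmaps hinj

end Cores

section Growth

open Finset Function

variable {s : ℕ}

/-- The positive operator sending `g` to the function `m ↦ 2 ∑ g n`, the sum running over the `n`
with `0 ≤ m - 2 n ≤ s`; it governs the recursion for the number of cores. -/
noncomputable def foldOp (s : ℕ) : Module.End ℝ (ℤ → ℝ) :=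
  LinearMap.pi fun m => (2 : ℝ) • ∑ n ∈ foldWindow s m, LinearMap.proj n

lemma foldOp_apply (s : ℕ) (g : ℤ → ℝ) (m : ℤ) :
    foldOp s g m = 2 * ∑ n ∈ foldWindow s m, g n := by
  simp [foldOp]

lemma abs_sum_range_le_of_antiperiodic {G : Type*} [AddCommGroup G] [LinearOrder G]
    [IsOrderedAddMonoid G] {g : ℕ → G} {q : ℕ} {b : G} (hg : Antiperiodic g q)
    (hb : ∀ n, |g n| ≤ b) (L : ℕ) : |∑ i ∈ range L, g i| ≤ q • b := by
  have hpiece (g' : ℕ → G) (hb' : ∀ n, |g' n| ≤ b) : |∑ i ∈ range q, g' i| ≤ q • b :=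
    (abs_sum_le_sum_abs _ _).trans <| (sum_le_card_nsmul _ _ b fun i _ => hb' i).trans_eq <| by
      rw [card_range]
  have hshift : ∑ i ∈ range L, g (q + i) = -∑ i ∈ range L, g i := by
    simp only [add_comm q, hg _, sum_neg_distrib]
  have hboundary : 2 • ∑ i ∈ range L, g i = ∑ i ∈ range q, g i - ∑ i ∈ range q, g (L + i) := by
    have hsplit := sum_range_add g q L
    rw [add_comm q L, sum_range_add, hshift] at hsplit
    rw [two_nsmul, eq_sub_iff_add_eq, add_assoc, hsplit]
    abel
  refine le_of_nsmul_le_nsmul_right two_ne_zero ?_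
  calc 2 • |∑ i ∈ range L, g i| = |∑ i ∈ range q, g i - ∑ i ∈ range q, g (L + i)| := by
        rw [← abs_nsmul, hboundary]
    _ ≤ |∑ i ∈ range q, g i| + |∑ i ∈ range q, g (L + i)| := abs_sub _ _
    _ ≤ q • b + q • b := add_le_add (hpiece _ hb) (hpiece _ fun n => hb (L + n))
    _ = 2 • (q • b) := (two_nsmul _).symm

lemma abs_sum_Icc_le_of_antiperiodic {G : Type*} [AddCommGroup G] [LinearOrder G]
    [IsOrderedAddMonoid G] {g : ℤ → G} {q : ℕ} {b : G} (hg : Antiperiodic g q)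
    (hb : ∀ n, |g n| ≤ b) (u v : ℤ) : |∑ n ∈ Icc u v, g n| ≤ q • b := by
  have hg' : Antiperiodic (fun i : ℕ => g (u + i)) q := fun i => by
    simp only [Nat.cast_add, ← add_assoc, hg _]
  rw [Int.Icc_eq_finset_map, sum_map]
  exact abs_sum_range_le_of_antiperiodic hg' (fun i => hb (u + i)) _

lemma antiperiodic_foldOp (s : ℕ) {g : ℤ → ℝ} {q : ℕ} (hg : Antiperiodic g q) :
    Antiperiodic (foldOp s g) (2 * q : ℕ) := by
  intro m
  have hwindow : foldWindow s (m + (2 * q : ℕ)) =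
      (foldWindow s m).map (addRightEmbedding (q : ℤ)) := by
    rw [foldWindow, foldWindow, map_add_right_Icc]
    congr 1 <;> omega
  rw [foldOp_apply, foldOp_apply, hwindow, hg.sum_map_addRightEmbedding, mul_neg]

lemma abs_foldOp_le_of_antiperiodic (s : ℕ) {g : ℤ → ℝ} {q : ℕ} {b : ℝ} (hg : Antiperiodic g q)
    (hb : ∀ n, |g n| ≤ b) (m : ℤ) : |foldOp s g m| ≤ 2 * (q * b) := by
  rw [foldOp_apply, abs_mul, abs_two, ← nsmul_eq_mul]
  gcongr
  exact abs_sum_Icc_le_of_antiperiodic hg hb _ _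

/-- The deviation of the operator from having the constant function `1` as an eigenfunction with
eigenvalue `s + 1`. -/
noncomputable def foldDefect (s : ℕ) : ℤ → ℝ := foldOp s 1 - ((s : ℝ) + 1) • 1

lemma foldDefect_apply (s : ℕ) (m : ℤ) :
    foldDefect s m = (2 * (#(foldWindow s m) : ℤ) - (s + 1) : ℤ) := by
  simp [foldDefect, foldOp_apply]

lemma antiperiodic_foldDefect (s : ℕ) : Antiperiodic (foldDefect s) 1 := by
  intro m
  rw [foldDefect_apply, foldDefect_apply, ← Int.cast_neg, Int.cast_inj, foldWindow, foldWindow,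
    Int.card_Icc, Int.card_Icc]
  omega

lemma abs_foldDefect_le (s : ℕ) (m : ℤ) : |foldDefect s m| ≤ 1 := by
  have hcard : |2 * (#(foldWindow s m) : ℤ) - (s + 1)| ≤ 1 := by
    rw [foldWindow, Int.card_Icc, abs_le]
    omega
  rw [foldDefect_apply]
  exact_mod_cast hcard

lemma abs_foldOp_foldDefect_le (s : ℕ) :
    (∀ m, |foldOp s (foldDefect s) m| ≤ 2) ∧ (∀ m, |foldOp s (foldOp s (foldDefect s)) m| ≤ 8) ∧
      ∀ m, |foldOp s (foldOp s (foldOp s (foldDefect s))) m| ≤ 64 := by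
  have h0 : Antiperiodic (foldDefect s) (1 : ℕ) := by
    rw [Nat.cast_one]
    exact antiperiodic_foldDefect s
  have h1 := antiperiodic_foldOp s h0
  have h2 := antiperiodic_foldOp s h1
  have b1 (m : ℤ) : |foldOp s (foldDefect s) m| ≤ 2 :=
    (abs_foldOp_le_of_antiperiodic s h0 (abs_foldDefect_le s) m).trans_eq (by norm_num)
  have b2 (m : ℤ) : |foldOp s (foldOp s (foldDefect s)) m| ≤ 8 :=
    (abs_foldOp_le_of_antiperiodic s h1 b1 m).trans_eq (by norm_num)
  exact ⟨b1, b2, fun m => (abs_foldOp_le_of_antiperiodic s h2 b2 m).trans_eq (by norm_num)⟩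

/-- The factor by which the number of cores is shown to grow when the level doubles. -/
noncomputable def growthRate (s : ℕ) : ℝ := s + 1 - 2 / ((s : ℝ) + 1) ^ 2

lemma le_growthRate (hs : 1 ≤ s) : (s : ℝ) ≤ growthRate s := by
  have hs' : (1 : ℝ) ≤ s := by exact_mod_cast hs
  have : 2 / ((s : ℝ) + 1) ^ 2 ≤ 1 := by
    rw [div_le_one (by positivity)]
    nlinarith
  rw [growthRate]
  linarith

/-- The Neumann series of `(1 - A / (s + 1))⁻¹` applied to the defect, truncated after three terms
and added to `1`; it is an approximate eigenfunction of the operator `A = foldOp s`. -/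
noncomputable def approxEigenfunction (s : ℕ) : ℤ → ℝ :=
  1 + ((s : ℝ) + 1)⁻¹ • foldDefect s + (((s : ℝ) + 1) ^ 2)⁻¹ • foldOp s (foldDefect s) +
    (((s : ℝ) + 1) ^ 3)⁻¹ • foldOp s (foldOp s (foldDefect s))

lemma foldOp_approxEigenfunction (s : ℕ) :
    foldOp s (approxEigenfunction s) = ((s : ℝ) + 1) • approxEigenfunction s +
      (((s : ℝ) + 1) ^ 3)⁻¹ • foldOp s (foldOp s (foldOp s (foldDefect s))) := by
  have hone : foldOp s 1 = ((s : ℝ) + 1) • 1 + foldDefect s := (add_sub_cancel _ _).symm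
  have hne : (s : ℝ) + 1 ≠ 0 := by positivity
  simp only [approxEigenfunction, map_add, map_smul, hone]
  ext m
  simp only [Pi.add_apply, Pi.smul_apply, smul_eq_mul]
  field_simp

lemma approxEigenfunction_mem_Icc (hs : 7 ≤ s) (m : ℤ) :
    approxEigenfunction s m ∈ Set.Icc (1 / 2) 2 := by
  obtain ⟨b1, b2, -⟩ := abs_foldOp_foldDefect_le s
  have hs' : (8 : ℝ) ≤ s + 1 := by exact_mod_cast Nat.succ_le_succ hs
  have hterm {c x b : ℝ} (hc : 0 < c) (hx : |x| ≤ b) (hbc : 8 * b ≤ c) : |c⁻¹ * x| ≤ 1 / 8 := by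
    rw [abs_mul, abs_inv, abs_of_pos hc, inv_mul_le_iff₀ hc]
    linarith
  have t0 := abs_le.1 (hterm (by positivity) (abs_foldDefect_le s m) (by linarith))
  have t1 := abs_le.1 (hterm (c := ((s : ℝ) + 1) ^ 2) (by positivity) (b1 m) (by nlinarith))
  have t2 := abs_le.1 (hterm (c := ((s : ℝ) + 1) ^ 3) (by positivity) (b2 m) <|
    le_trans (by norm_num) (pow_le_pow_left₀ (by norm_num) hs' 3))
  simp only [approxEigenfunction, Pi.add_apply, Pi.smul_apply, Pi.one_apply, smul_eq_mul]
  constructor <;> linarith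

lemma growthRate_mul_approxEigenfunction_le (hs : 64 ≤ s) (m : ℤ) :
    growthRate s * approxEigenfunction s m ≤ foldOp s (approxEigenfunction s) m := by
  obtain ⟨-, -, b3⟩ := abs_foldOp_foldDefect_le s
  have hs' : (64 : ℝ) ≤ s + 1 := by exact_mod_cast hs.trans s.le_succ
  have herror : -(1 / ((s : ℝ) + 1) ^ 2) ≤
      (((s : ℝ) + 1) ^ 3)⁻¹ * foldOp s (foldOp s (foldOp s (foldDefect s))) m := by
    calc -(1 / ((s : ℝ) + 1) ^ 2) = (((s : ℝ) + 1) ^ 3)⁻¹ * -(s + 1) := by field_simp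
      _ ≤ _ := by
        gcongr
        linarith [(abs_le.1 (b3 m)).1]
  have hlow : 1 / ((s : ℝ) + 1) ^ 2 ≤ 2 / ((s : ℝ) + 1) ^ 2 * approxEigenfunction s m := by
    calc 1 / ((s : ℝ) + 1) ^ 2 = 2 / ((s : ℝ) + 1) ^ 2 * (1 / 2) := by ring
      _ ≤ _ := by
        gcongr
        exact (approxEigenfunction_mem_Icc (by omega) m).1
  rw [foldOp_approxEigenfunction, growthRate, sub_mul]
  simp only [Pi.add_apply, Pi.smul_apply, smul_eq_mul]
  linarith

lemma foldOp_le_foldOp {g g' : ℤ → ℝ} {m : ℤ} (h : ∀ n ∈ foldWindow s m, g n ≤ g' n) :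
    foldOp s g m ≤ foldOp s g' m := by
  rw [foldOp_apply, foldOp_apply]
  exact mul_le_mul_of_nonneg_left (sum_le_sum h) two_pos.le

/-- The shift by `s` is there because the `n` in the window of `m` satisfy `m + s ≤ 2 (n + s)`. -/
lemma mul_rpow_le_foldOp {r : ℝ} {g : ℤ → ℝ} {m : ℤ} (hr : 0 ≤ r) (hm : 0 ≤ (m : ℝ) + s)
    (hg : ∀ n, 0 ≤ g n) (hsub : 2 ^ r * g m ≤ foldOp s g m) :
    g m * ((m : ℝ) + s) ^ r ≤ foldOp s (fun n => g n * ((n : ℝ) + s) ^ r) m := by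
  have hterm : ∀ n ∈ foldWindow s m,
      g n * (((m : ℝ) + s) / 2) ^ r ≤ g n * ((n : ℝ) + s) ^ r := by
    intro n hn
    have hns : (m : ℝ) - 2 * n ≤ s := by exact_mod_cast (mem_foldWindow.1 hn).2
    gcongr
    · exact hg n
    · linarith
  calc g m * ((m : ℝ) + s) ^ r
      = 2 ^ r * g m * (((m : ℝ) + s) / 2) ^ r := by
        rw [Real.div_rpow hm two_pos.le]
        field_simp
    _ ≤ foldOp s g m * (((m : ℝ) + s) / 2) ^ r := by gcongr
    _ = foldOp s (fun n => g n * (((m : ℝ) + s) / 2) ^ r) m := by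
        rw [foldOp_apply, foldOp_apply, ← sum_mul, mul_assoc]
    _ ≤ foldOp s (fun n => g n * ((n : ℝ) + s) ^ r) m := foldOp_le_foldOp hterm

lemma exists_pos_mul_rpow_le_of_foldOp_le {b : ℤ} {r C : ℝ} {g T : ℤ → ℝ} (hb : 0 < b)
    (hr : 0 ≤ r) (hC : 0 < C) (hg : ∀ m, 0 ≤ g m) (hgC : ∀ m, g m ≤ C)
    (hsub : ∀ m, 2 ^ r * g m ≤ foldOp s g m)
    (hT1 : ∀ m, b ≤ m → 1 ≤ T m) (hT : ∀ m, 2 * b + s ≤ m → foldOp s T m ≤ T m) :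
    ∃ c > 0, ∀ m, b ≤ m → c * (g m * ((m : ℝ) + s) ^ r) ≤ T m := by
  have hb' : (0 : ℝ) < b := Int.cast_pos.2 hb
  have : (0 : ℝ) ≤ s := s.cast_nonneg
  set D : ℝ := C * (2 * b + 2 * s) ^ r
  have hD0 : 0 < D := by positivity
  refine ⟨D⁻¹, inv_pos.2 hD0, fun m => ?_⟩
  induction m using Int.strongRec (m := 2 * b + s) with
  | lt m hm =>
    intro hbm
    have hbm' : (b : ℝ) ≤ m := Int.cast_le.2 hbm
    have hm' : (m : ℝ) ≤ 2 * b + s := by exact_mod_cast hm.le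
    have hle : g m * ((m : ℝ) + s) ^ r ≤ D :=
      mul_le_mul (hgC m) (Real.rpow_le_rpow (by linarith) (by linarith) hr)
        (Real.rpow_nonneg (by linarith) r) hC.le
    calc D⁻¹ * (g m * ((m : ℝ) + s) ^ r) ≤ 1 := by rwa [inv_mul_le_iff₀ hD0, mul_one]
      _ ≤ T m := hT1 m hbm
  | ge m hm ih =>
    intro hbm
    have hm0 : (0 : ℝ) < m := Int.cast_pos.2 (by omega)
    let h (n : ℤ) : ℝ := g n * ((n : ℝ) + s) ^ r
    calc D⁻¹ * (g m * ((m : ℝ) + s) ^ r) ≤ D⁻¹ * foldOp s h m :=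
          mul_le_mul_of_nonneg_left (mul_rpow_le_foldOp hr (by linarith) hg (hsub m))
            (inv_nonneg.2 hD0.le)
      _ = foldOp s (D⁻¹ • h) m := by rw [map_smul, Pi.smul_apply, smul_eq_mul]
      _ ≤ foldOp s T m := foldOp_le_foldOp fun n hn => by
          obtain ⟨hn0, hns⟩ := mem_foldWindow.1 hn
          exact ih n (by omega) (by omega)
      _ ≤ T m := hT m hm

end Growth

section Cubic

variable {s : ℕ} {lam : ℝ}

lemma cubic_pos_of_growthRate_le (hs : 1 ≤ s) {x : ℝ} (hx : growthRate s ≤ x) :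
    0 < x ^ 3 - ((s : ℝ) + 2) * x ^ 2 + (s : ℝ) * x + ((s : ℝ) + 4) := by
  have hs' : (1 : ℝ) ≤ s := by exact_mod_cast hs
  obtain ⟨t, rfl⟩ : ∃ t, x = s + 1 + t := ⟨x - (s + 1), by ring⟩
  have ht : -2 ≤ ((s : ℝ) + 1) ^ 2 * t := by
    rw [mul_comm, ← div_le_iff₀ (by positivity), neg_div]
    rw [growthRate] at hx
    linarith
  have hexpand : (s + 1 + t) ^ 3 - ((s : ℝ) + 2) * (s + 1 + t) ^ 2 + s * (s + 1 + t) + (s + 4) =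
      3 + ((s : ℝ) ^ 2 + s - 1) * t + (2 * s + 1 + t) * t ^ 2 := by ring
  rw [hexpand]
  rcases le_or_gt 0 t with h0 | h0
  · have : 0 ≤ (s : ℝ) ^ 2 + s - 1 := by nlinarith
    positivity
  · have hlinear : -2 ≤ ((s : ℝ) ^ 2 + s - 1) * t := by nlinarith
    have hquadratic : 0 ≤ (2 * s + 1 + t) * t ^ 2 :=
      mul_nonneg (by nlinarith) (sq_nonneg t)
    linarith

lemma IsGreatestRoot.lt_growthRate (hs : 1 ≤ s)
    (h : IsGreatestRoot (fun x : ℝ => x ^ 3 - ((s : ℝ) + 2) * x ^ 2 + (s : ℝ) * x +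
      ((s : ℝ) + 4)) lam) : lam < growthRate s := by
  by_contra! hge
  exact (cubic_pos_of_growthRate_le hs hge).ne' h.1

lemma IsGreatestRoot.natCast_le (hs : 3 ≤ s)
    (h : IsGreatestRoot (fun x : ℝ => x ^ 3 - ((s : ℝ) + 2) * x ^ 2 + (s : ℝ) * x +
      ((s : ℝ) + 4)) lam) : (s : ℝ) ≤ lam := by
  have hs' : (3 : ℝ) ≤ s := by exact_mod_cast hs
  have hcont : ContinuousOn (fun x : ℝ => x ^ 3 - ((s : ℝ) + 2) * x ^ 2 + (s : ℝ) * x +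
      ((s : ℝ) + 4)) (Set.Icc (s : ℝ) (s + 1)) := by fun_prop
  obtain ⟨x, hx, hroot⟩ := intermediate_value_Icc (le_add_of_nonneg_right zero_le_one) hcont
    (show (0 : ℝ) ∈ Set.Icc _ _ from ⟨by nlinarith, by nlinarith⟩)
  exact hx.1.trans (h.2 x hroot)

end Cubic

section Asymptotics

open Asymptotics Filter

lemma isLittleO_rpow_rpow_atTop_of_lt {p q : ℝ} (hpq : p < q) :
    (fun x : ℝ => x ^ p) =o[atTop] fun x => x ^ q := by
  have hdiv : (fun x : ℝ => x ^ (-(q - p))) =ᶠ[atTop] fun x => x ^ p / x ^ q := by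
    filter_upwards [eventually_gt_atTop 0] with x hx
    rw [← Real.rpow_sub hx, neg_sub]
  refine (isLittleO_iff_tendsto' ?_).2
    ((tendsto_rpow_neg_atTop (sub_pos.2 hpq)).congr' hdiv)
  filter_upwards [eventually_gt_atTop 0] with x hx h
  exact absurd h (Real.rpow_pos_of_pos hx q).ne'

variable {a N d s : ℕ}

lemma exists_pos_mul_rpow_le_ncard_cores (ha : 2 ≤ a) (hda : d + 2 = a ^ 2)
    (hdN : d + 4 < N) (hs : 64 ≤ s) (hN : a ^ s ≤ N) :
    ∃ c > 0, ∀ m : ℕ, 8 ≤ m →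
      c * (m : ℝ) ^ Real.logb 2 (growthRate s) ≤ (cores a N d m).ncard := by
  have hd : 0 < d := by nlinarith
  have hone : 1 ≤ growthRate s :=
    (Nat.one_le_cast.2 (by omega)).trans (le_growthRate (s := s) (by omega))
  have hlog : 0 ≤ Real.logb 2 (growthRate s) := Real.logb_nonneg one_lt_two hone
  have hg (m : ℤ) := approxEigenfunction_mem_Icc (s := s) (by omega) m
  let T (m : ℤ) : ℝ := (cores a N d m.toNat).ncard
  have hT1 (m : ℤ) (hm : 8 ≤ m) : 1 ≤ T m := by
    have hne : (cores a N d m.toNat).Nonempty := cores_nonempty (by omega) hd hda hdN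
      ((Nat.pow_le_pow_right (by omega) (by omega)).trans hN) (by omega)
    exact Nat.one_le_cast.2 ((Set.ncard_pos (finite_cores (by omega) _)).2 hne)
  have hT (m : ℤ) (hm : 2 * 8 + s ≤ m) : foldOp s T m ≤ T m := by
    simp only [foldOp_apply, T]
    exact_mod_cast two_mul_sum_ncard_cores_le (d := d) (m := m) ha hd (by omega) hN (by omega)
  obtain ⟨c, hc, hgrowth⟩ := exists_pos_mul_rpow_le_of_foldOp_le (by norm_num) hlog two_pos
    (fun m => one_half_pos.le.trans (hg m).1) (fun m => (hg m).2)
    (fun m => by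
      rw [Real.rpow_logb two_pos (by norm_num) (by linarith)]
      exact growthRate_mul_approxEigenfunction_le hs m) hT1 hT
  refine ⟨c * (1 / 2), by positivity, fun m hm => ?_⟩
  calc c * (1 / 2) * (m : ℝ) ^ Real.logb 2 (growthRate s)
      = c * (1 / 2 * (m : ℝ) ^ Real.logb 2 (growthRate s)) := mul_assoc _ _ _
    _ ≤ c * (approxEigenfunction s m * (((m : ℤ) : ℝ) + s) ^ Real.logb 2 (growthRate s)) := by
      refine mul_le_mul_of_nonneg_left (mul_le_mul (hg m).1 ?_ (by positivity)
        (one_half_pos.le.trans (hg m).1)) hc.le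
      exact Real.rpow_le_rpow m.cast_nonneg (by simp) hlog
    _ ≤ (cores a N d m).ncard := hgrowth m (by exact_mod_cast hm)

lemma isBigO_rpow_logb_growthRate (ha : 2 ≤ a) (hs : 64 ≤ s) (hN : a ^ s ≤ N) :
    (fun m : ℕ => (m : ℝ) ^ Real.logb 2 (growthRate s)) =O[atTop]
      fun m => (f (a ^ m) N : ℝ) := by
  have ha2 : 2 ^ 2 ≤ a ^ 2 := Nat.pow_le_pow_left ha 2
  obtain ⟨d, hda⟩ : ∃ d, d + 2 = a ^ 2 := ⟨a ^ 2 - 2, by omega⟩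
  have hdN : d + 4 < N := by
    have h4 : a ^ 4 ≤ N := (Nat.pow_le_pow_right (by omega) (by omega)).trans hN
    nlinarith
  obtain ⟨c, hc, hgrowth⟩ := exists_pos_mul_rpow_le_ncard_cores ha hda hdN hs hN
  refine IsBigO.of_bound c⁻¹ ?_
  filter_upwards [eventually_ge_atTop 8] with m hm
  rw [Real.norm_of_nonneg (by positivity), Real.norm_natCast, le_inv_mul_iff₀ hc]
  exact (hgrowth m hm).trans (Nat.cast_le.2 (ncard_cores_le_f (by omega) m))

lemma IsGreatestRoot.isLittleO_rpow_logb (ha : 2 ≤ a) (hs : 64 ≤ s) (hN : a ^ s ≤ N) {lam : ℝ}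
    (hlam : IsGreatestRoot (fun x : ℝ => x ^ 3 - ((s : ℝ) + 2) * x ^ 2 + (s : ℝ) * x +
      ((s : ℝ) + 4)) lam) :
    (fun m : ℕ => (m : ℝ) ^ Real.logb 2 lam) =o[atTop] fun m => (f (a ^ m) N : ℝ) := by
  have hpos : 0 < lam := (Nat.cast_pos.2 (by omega)).trans_le (hlam.natCast_le (by omega))
  have hlog : Real.logb 2 lam < Real.logb 2 (growthRate s) :=
    Real.logb_lt_logb one_lt_two hpos (hlam.lt_growthRate (by omega))
  exact ((isLittleO_rpow_rpow_atTop_of_lt hlog).comp_tendsto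
    tendsto_natCast_atTop_atTop).trans_isBigO (isBigO_rpow_logb_growthRate ha hs hN)

theorem theorem2_general (ha : 2 ≤ a) (hs : 64 ≤ s) (hN : a ^ s ≤ N) {lam : ℝ}
    (hlam : IsGreatestRoot (fun x : ℝ => x ^ 3 - ((s : ℝ) + 2) * x ^ 2 + (s : ℝ) * x +
      ((s : ℝ) + 4)) lam) (C : ℝ) :
    ∀ᶠ m : ℕ in atTop, C * (m : ℝ) ^ Real.logb 2 lam ≤ (f (a ^ m) N : ℝ) := by
  filter_upwards [((hlam.isLittleO_rpow_logb ha hs hN).const_mul_left C).def one_pos] with m hm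
  rw [one_mul, Real.norm_natCast] at hm
  exact (Real.le_norm_self _).trans hm

end Asymptotics

theorem theorem2 :
    ∃ s₀ : ℕ, ∃ c : ℝ, 0 < c ∧
      ∀ a N : ℕ, 2 ≤ a → a ^ s₀ ≤ N →
        ∀ lam : ℝ,
          IsGreatestRoot (fun x : ℝ =>
            x ^ 3 - ((Nat.log a N : ℝ) + 2) * x ^ 2 + (Nat.log a N : ℝ) * x +
              ((Nat.log a N : ℝ) + 4)) lam →
          ∃ M : ℕ, ∀ m : ℕ, M ≤ m →
            c * (2 : ℝ) ^ (-(5 * (Real.logb 2 (Real.logb 2 (N : ℝ))) ^ 2)) *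
                (m : ℝ) ^ (Real.logb 2 lam) ≤ (f (a ^ m) N : ℝ) := by
  refine ⟨64, 1, one_pos, fun a N ha hN lam hlam => Filter.eventually_atTop.1 ?_⟩
  exact theorem2_general ha (Nat.le_log_of_pow_le ha hN)
    (Nat.pow_log_le_self a (lt_of_lt_of_le (by positivity) hN).ne') hlam _
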